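/- arXiv:1301.3708 — 2 statements merged into one kernel-verified Lean document; each statement's English description precedes it below -/
import Mathlib

section
/- Let N ≥ n ≥ 1 be integers, let A ∈ ℂ^{N×N} be Hermitian positive definite with eigendecomposition A = U_A D_A U_A^H where U_A is unitary and D_A is real diagonal with 0 < (D_A)_{1,1} < … < (D_A)_{N,N} (distinct eigenvalues), and let B ∈ ℂ^{n×n} be Hermitian positive definite with eigendecomposition B = U_B D_B U_B^H where U_B is unitary and D_B is real diagonal with (D_B)_{1,1} > … > (D_B)_{n,n} > 0 (distinct eigenvalues). Then every P ∈ ℂ^{n×N} that satisfies P A^{-1} P^H ⪰ B and attains the minimal energy tr(P P^H) = Σ_{i=1}^n (D_A)_{i,i}(D_B)_{i,i} among all such feasible matrices is necessarily of the form P = U_B D U_A^H, where D ∈ ℂ^{n×N} is rectangular diagonal with |(D)_{i,i}| = √((D_A)_{i,i}(D_B)_{i,i}) for i = 1,…,n. (Theorem 1, uniqueness part.) -/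
open Matrix Finset
open scoped ComplexOrder

/-!
Rotating by the eigenvectors reduces to `A = diag a`, `B = diag b` and turns `P` into some `Q`.
A unitary `W` makes `T = W Q` upper triangular. With `S i k = |W i k|²`, a doubly stochastic matrix,
the diagonal of the constraint reads `(S b) i ≤ ∑ j, |T i j|² / a j`. Since row `i` of `T` only
meets eigenvalues `a j ≥ a i`, this gives
`tr (Q Qᴴ) = ∑ i j, |T i j|² ≥ ∑ i, a i * ∑ j, |T i j|² / a j`
`≥ ∑ i, a i * (S b) i ≥ ∑ i, a i * b i`, the last step by Birkhoff's theorem and the rearrangement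
inequality. If the two ends agree, strict monotonicity forces `S = 1`, so that `W` is diagonal, and
leaves only the diagonal of `T`.
-/

section Rearrangement

lemma perm_eq_one_of_monotone {ι : Type*} [Finite ι] [LinearOrder ι] {σ : Equiv.Perm ι}
    (hσ : Monotone σ) : σ = 1 :=
  have hσ' := hσ.strictMono_of_injective σ.injective
  Equiv.ext fun _ => le_antisymm hσ'.apply_le hσ'.le_apply

variable {ι : Type*} [Fintype ι] [LinearOrder ι] {f g : ι → ℝ}

lemma sum_mul_lt_sum_mul_comp_perm (hf : StrictMono f) (hg : StrictAnti g) {σ : Equiv.Perm ι}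
    (hσ : σ ≠ 1) : ∑ i, f i * g i < ∑ i, f i * g (σ i) := by
  refine (hf.monotone.antivary hg.antitone).sum_mul_lt_sum_mul_comp_perm_iff.2 fun h => hσ ?_
  refine perm_eq_one_of_monotone fun i k hik => not_lt.1 fun hlt => hlt.ne' ?_
  exact congrArg σ (hik.antisymm (hf.le_iff_le.1 (h (hg hlt))))

lemma eq_one_of_dotProduct_mulVec_le {S : Matrix ι ι ℝ} (hS : S ∈ doublyStochastic ℝ ι)
    (hf : StrictMono f) (hg : StrictAnti g) (h : f ⬝ᵥ S *ᵥ g ≤ f ⬝ᵥ g) : S = 1 := by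
  obtain ⟨w, hw, hw_sum, rfl⟩ := exists_eq_sum_perm_of_mem_doublyStochastic hS
  have expand : f ⬝ᵥ (∑ σ, w σ • σ.permMatrix ℝ) *ᵥ g = ∑ σ, w σ * ∑ i, f i * g (σ i) := by
    simp only [sum_mulVec, smul_mulVec, permMatrix_mulVec, dotProduct_sum, dotProduct_smul]
    rfl
  have gap_nonneg (σ) : 0 ≤ w σ * (∑ i, f i * g (σ i) - ∑ i, f i * g i) :=
    mul_nonneg (hw σ)
      (sub_nonneg.2 (hf.monotone.antivary hg.antitone).sum_mul_le_sum_mul_comp_perm)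
  have gap_sum : ∑ σ, w σ * (∑ i, f i * g (σ i) - ∑ i, f i * g i) ≤ 0 := by
    simp only [mul_sub, sum_sub_distrib, ← sum_mul, hw_sum, one_mul]
    rw [← expand]
    exact sub_nonpos.2 h
  have w_eq_zero (σ) (hσ : σ ≠ 1) : w σ = 0 := by
    have gap_eq := (sum_eq_zero_iff_of_nonneg fun σ _ => gap_nonneg σ).1
      (gap_sum.antisymm (sum_nonneg fun σ _ => gap_nonneg σ)) σ (mem_univ σ)
    exact (mul_eq_zero.1 gap_eq).resolve_right
      (sub_pos.2 (sum_mul_lt_sum_mul_comp_perm hf hg hσ)).ne'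
  have w_one : w 1 = 1 := by
    rw [← hw_sum, Fintype.sum_eq_single 1 w_eq_zero]
  rw [Fintype.sum_eq_single 1 fun σ hσ => by rw [w_eq_zero σ hσ, zero_smul], w_one, one_smul,
    permMatrix_one]

end Rearrangement

section WeightedRows

variable {ι κ : Type*} [Fintype ι] [LinearOrder ι] [Fintype κ]

lemma mul_sub_nonneg_of_ne_zero_imp {r a c : ℝ} (hr : 0 ≤ r) (h : r ≠ 0 → c ≤ a) :
    0 ≤ r * (a - c) := by
  rcases eq_or_ne r 0 with rfl | h0
  · rw [zero_mul]
  · exact mul_nonneg hr (sub_nonneg.2 (h h0))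

lemma mul_sum_le_sum_mul {r a : κ → ℝ} {c : ℝ} (hr : ∀ j, 0 ≤ r j)
    (hc : ∀ j, r j ≠ 0 → c ≤ a j) : c * ∑ j, r j ≤ ∑ j, r j * a j := by
  rw [mul_sum]
  refine sum_le_sum fun j _ => ?_
  linarith [mul_sub_nonneg_of_ne_zero_imp (hr j) (hc j)]

lemma eq_of_sum_mul_le_mul_sum {r a : κ → ℝ} {c : ℝ} (hr : ∀ j, 0 ≤ r j)
    (hc : ∀ j, r j ≠ 0 → c ≤ a j) (h : ∑ j, r j * a j ≤ c * ∑ j, r j) {j : κ} (hj : r j ≠ 0) :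
    a j = c := by
  have excess_nonneg (j) : 0 ≤ r j * (a j - c) := mul_sub_nonneg_of_ne_zero_imp (hr j) (hc j)
  have excess_sum : ∑ j, r j * (a j - c) ≤ 0 := by
    simp only [mul_sub, sum_sub_distrib, ← sum_mul]
    linarith
  have excess_eq := (sum_eq_zero_iff_of_nonneg fun j _ => excess_nonneg j).1
    (excess_sum.antisymm (sum_nonneg fun j _ => excess_nonneg j)) j (mem_univ j)
  exact sub_eq_zero.1 ((mul_eq_zero.1 excess_eq).resolve_left hj)

theorem eq_one_and_row_sum_eq_of_sum_mul_le {a : κ → ℝ} {c b : ι → ℝ}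
    (hc_pos : ∀ i, 0 < c i) (hc : StrictMono c) (hb : StrictAnti b)
    {R : ι → κ → ℝ} (hR : ∀ i j, 0 ≤ R i j) (hRa : ∀ i j, R i j ≠ 0 → c i ≤ a j)
    {S : Matrix ι ι ℝ} (hS : S ∈ doublyStochastic ℝ ι) (hSR : ∀ i, (S *ᵥ b) i ≤ ∑ j, R i j)
    (h : ∑ i, ∑ j, R i j * a j ≤ ∑ i, c i * b i) :
    S = 1 ∧ ∀ i, ∑ j, R i j = b i ∧ ∀ j, R i j ≠ 0 → a j = c i := by
  have le_row (i) : c i * (S *ᵥ b) i ≤ c i * ∑ j, R i j :=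
    mul_le_mul_of_nonneg_left (hSR i) (hc_pos i).le
  have row_le (i) : c i * ∑ j, R i j ≤ ∑ j, R i j * a j := mul_sum_le_sum_mul (hR i) (hRa i)
  obtain rfl : S = 1 := eq_one_of_dotProduct_mulVec_le hS hc hb
    ((sum_le_sum fun i _ => (le_row i).trans (row_le i)).trans h)
  simp only [one_mulVec] at le_row
  have total_eq (i) : c i * b i = ∑ j, R i j * a j :=
    have le (i) (_ : i ∈ univ) := (le_row i).trans (row_le i)
    (sum_eq_sum_iff_of_le le).1 ((sum_le_sum le).antisymm h) i (mem_univ i)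
  refine ⟨rfl, fun i => ⟨?_, fun j => eq_of_sum_mul_le_mul_sum (hR i) (hRa i) ?_⟩⟩
  · exact mul_left_cancel₀ (hc_pos i).ne'
      (((row_le i).trans_eq (total_eq i).symm).antisymm (le_row i))
  · exact (total_eq i).symm.trans_le (le_row i)

end WeightedRows

section Matrices

variable {𝕜 l m n : Type*} [RCLike 𝕜] [Fintype n]

lemma mul_diagonal_mul_conjTranspose_apply_self [DecidableEq n] (X : Matrix m n 𝕜) (d : n → ℝ)
    (i : m) :
    (X * diagonal (fun j => (d j : 𝕜)) * Xᴴ) i i = ((∑ j, ‖X i j‖ ^ 2 * d j : ℝ) : 𝕜) := by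
  rw [mul_apply, RCLike.ofReal_sum]
  refine sum_congr rfl fun j _ => ?_
  rw [mul_diagonal, conjTranspose_apply, mul_right_comm, RCLike.star_def, RCLike.mul_conj,
    RCLike.ofReal_mul, RCLike.ofReal_pow]

lemma mul_conjTranspose_self_apply_self (X : Matrix m n 𝕜) (i : m) :
    (X * Xᴴ) i i = ((∑ j, ‖X i j‖ ^ 2 : ℝ) : 𝕜) := by
  classical simpa using mul_diagonal_mul_conjTranspose_apply_self X 1 i

lemma trace_mul_conjTranspose_self [Fintype m] (X : Matrix m n 𝕜) :
    (X * Xᴴ).trace = ((∑ i, ∑ j, ‖X i j‖ ^ 2 : ℝ) : 𝕜) := by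
  simp only [trace, diag_apply, mul_conjTranspose_self_apply_self, RCLike.ofReal_sum]

lemma map_norm_sq_mem_doublyStochastic [DecidableEq n] {U : Matrix n n 𝕜}
    (hU : U ∈ unitaryGroup n 𝕜) : U.map (‖·‖ ^ 2) ∈ doublyStochastic ℝ n := by
  have row_sum {V : Matrix n n 𝕜} (hV : V * Vᴴ = 1) (i) : ∑ j, ‖V i j‖ ^ 2 = 1 := by
    have h := mul_conjTranspose_self_apply_self V i
    rw [hV, one_apply_eq] at h
    exact_mod_cast h.symm
  refine mem_doublyStochastic_iff_sum.2 ⟨fun i j => sq_nonneg _,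
    row_sum (mem_unitaryGroup_iff.1 hU), fun j => ?_⟩
  have hU' : Uᴴ * Uᴴᴴ = 1 := by
    rw [conjTranspose_conjTranspose]
    exact mem_unitaryGroup_iff'.1 hU
  simpa using row_sum hU' j

lemma norm_mul_apply_of_map_norm_sq_eq_one [DecidableEq n] {W : Matrix n n 𝕜}
    (hW : W.map (‖·‖ ^ 2) = 1) (Q : Matrix n m 𝕜) (i : n) (j : m) : ‖(W * Q) i j‖ = ‖Q i j‖ := by
  have entry (i k) : ‖W i k‖ ^ 2 = (1 : Matrix n n ℝ) i k := congrFun₂ hW i k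
  have off_diag (k) (hk : k ≠ i) : W i k = 0 := by simpa [one_apply_ne' hk] using entry i k
  have norm_diag : ‖W i i‖ = 1 := by
    simpa [pow_eq_one_iff_of_nonneg] using entry i i
  rw [mul_apply, Fintype.sum_eq_single i fun k hk => by rw [off_diag k hk, zero_mul], norm_mul,
    norm_diag, one_mul]

lemma exists_unitary_mul_isUpperTriangular [LinearOrder n] (M : Matrix n n 𝕜) :
    ∃ W ∈ unitaryGroup n 𝕜, (W * M).IsUpperTriangular := by
  let := LocallyFiniteOrderBot.ofIic' n (fun a => {x | x ≤ a}) (by simp)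
  let v (k : n) : EuclideanSpace 𝕜 n := WithLp.toLp 2 fun i => M i k
  let std := EuclideanSpace.basisFun n 𝕜
  let gs := InnerProductSpace.gramSchmidtOrthonormalBasis (𝕜 := 𝕜) (by simp) v
  have toMatrix_v : std.toBasis.toMatrix v = M := by ext; simp [std, v, Module.Basis.toMatrix_apply]
  refine ⟨gs.toBasis.toMatrix std, gs.toMatrix_orthonormalBasis_mem_unitary std, ?_⟩
  rw [← toMatrix_v, ← std.coe_toBasis, Module.Basis.toMatrix_mul_toMatrix]
  exact InnerProductSpace.gramSchmidtOrthonormalBasis_inv_isUpperTriangular _ v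

lemma trace_unitary_mul_mul_conjTranspose [Fintype m] [DecidableEq m] {V : Matrix m m 𝕜}
    (hV : V ∈ unitaryGroup m 𝕜) (P : Matrix m n 𝕜) :
    ((V * P) * (V * P)ᴴ).trace = (P * Pᴴ).trace := by
  rw [trace_mul_comm, conjTranspose_mul, Matrix.mul_assoc, ← Matrix.mul_assoc Vᴴ,
    ← star_eq_conjTranspose V, mem_unitaryGroup_iff'.1 hV, Matrix.one_mul, trace_mul_comm]

lemma mul_unitary_mul_conjTranspose [DecidableEq n] {U : Matrix n n 𝕜}
    (hU : U ∈ unitaryGroup n 𝕜) (P : Matrix m n 𝕜) : (P * U) * (P * U)ᴴ = P * Pᴴ := by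
  rw [conjTranspose_mul, Matrix.mul_assoc, ← Matrix.mul_assoc U, ← star_eq_conjTranspose U,
    mem_unitaryGroup_iff.1 hU, Matrix.one_mul]

lemma inv_unitary_conj [DecidableEq n] {U : Matrix n n 𝕜} (hU : U ∈ unitaryGroup n 𝕜)
    (A : Matrix n n 𝕜) : (U * A * Uᴴ)⁻¹ = U * A⁻¹ * Uᴴ := by
  rw [Matrix.mul_inv_rev, Matrix.mul_inv_rev, ← star_eq_conjTranspose,
    inv_eq_left_inv (mem_unitaryGroup_iff.1 hU), inv_eq_left_inv (mem_unitaryGroup_iff'.1 hU),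
    Matrix.mul_assoc]

lemma inv_diagonal_ofReal [DecidableEq n] {d : n → ℝ} (hd : ∀ i, d i ≠ 0) :
    (diagonal fun i => (d i : 𝕜))⁻¹ = diagonal fun i => (((d i)⁻¹ : ℝ) : 𝕜) := by
  refine inv_eq_right_inv ?_
  rw [diagonal_mul_diagonal, ← diagonal_one]
  congr 1 with i
  rw [← RCLike.ofReal_mul, mul_inv_cancel₀ (hd i), RCLike.ofReal_one]

/-- The constraint `P A⁻¹ Pᴴ ⪰ B` of the energy minimization problem. -/
def IsFeasible [DecidableEq n] (A : Matrix n n 𝕜) (B : Matrix m m 𝕜) (P : Matrix m n 𝕜) : Prop :=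
  (P * A⁻¹ * Pᴴ - B).PosSemidef

lemma IsFeasible.mul_left [Finite l] [Fintype m] [DecidableEq n] {A : Matrix n n 𝕜}
    {B : Matrix m m 𝕜} {P : Matrix m n 𝕜} (h : IsFeasible A B P) (V : Matrix l m 𝕜) :
    IsFeasible A (V * B * Vᴴ) (V * P) := by
  have conj_posSemidef := h.mul_mul_conjTranspose_same V
  simpa only [IsFeasible, Matrix.mul_sub, Matrix.sub_mul, conjTranspose_mul, Matrix.mul_assoc]
    using conj_posSemidef

lemma IsFeasible.mul_right [DecidableEq n] {A : Matrix n n 𝕜} {B : Matrix m m 𝕜}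
    {P : Matrix m n 𝕜} {U : Matrix n n 𝕜} (hU : U ∈ unitaryGroup n 𝕜)
    (h : IsFeasible (U * A * Uᴴ) B P) : IsFeasible A B (P * U) := by
  rw [IsFeasible, inv_unitary_conj hU] at h
  simpa only [IsFeasible, conjTranspose_mul, Matrix.mul_assoc] using h

lemma IsFeasible.diag_le [Fintype m] [DecidableEq m] [DecidableEq n] {a : n → ℝ}
    (ha : ∀ j, a j ≠ 0) {b : m → ℝ} {W : Matrix m m 𝕜} {T : Matrix m n 𝕜}
    (h : IsFeasible (diagonal fun j => (a j : 𝕜)) (W * diagonal (fun i => (b i : 𝕜)) * Wᴴ) T)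
    (i : m) : (W.map (‖·‖ ^ 2) *ᵥ b) i ≤ ∑ j, ‖T i j‖ ^ 2 * (a j)⁻¹ := by
  rw [IsFeasible, inv_diagonal_ofReal ha] at h
  have diag_nonneg := h.diag_nonneg (i := i)
  rw [Matrix.sub_apply, mul_diagonal_mul_conjTranspose_apply_self,
    mul_diagonal_mul_conjTranspose_apply_self, sub_nonneg, RCLike.ofReal_le_ofReal] at diag_nonneg
  exact diag_nonneg

end Matrices

section SmallestValues

variable {ι κ : Type*} [LinearOrder ι] {a : κ → ℝ} {e : ι → κ}

/-- The indices `e i` list, in increasing order, the smallest values of `a`, each of them simple.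
For a spectrum `a` these are the eigenvalues which an optimal `P` uses. -/
structure EnumeratesSmallest (a : κ → ℝ) (e : ι → κ) : Prop where
  strictMono : StrictMono (a ∘ e)
  lt_of_notMem_range : ∀ i, ∀ j ∉ Set.range e, a (e i) < a j

lemma EnumeratesSmallest.eq_of_apply_eq (he : EnumeratesSmallest a e) {i : ι} {j : κ}
    (h : a j = a (e i)) : j = e i := by
  by_cases hj : j ∈ Set.range e
  · obtain ⟨k, rfl⟩ := hj
    exact congrArg e (he.strictMono.injective h)
  · exact absurd h (he.lt_of_notMem_range i j hj).ne'

lemma EnumeratesSmallest.le_of_isUpperTriangular {R : Type*} [Zero R]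
    (he : EnumeratesSmallest a e) {T : Matrix ι κ R}
    (hT : (T.submatrix id e).IsUpperTriangular) {i : ι} {j : κ} (hij : T i j ≠ 0) :
    a (e i) ≤ a j := by
  by_cases hj : j ∈ Set.range e
  · obtain ⟨k, rfl⟩ := hj
    exact he.strictMono.monotone (not_lt.1 fun hki => hij (hT hki))
  · exact (he.lt_of_notMem_range i j hj).le

lemma enumeratesSmallest_castLE {n N : ℕ} (hnN : n ≤ N) {a : Fin N → ℝ} (ha : StrictMono a) :
    EnumeratesSmallest a (Fin.castLE hnN) where
  strictMono := ha.comp (Fin.strictMono_castLE hnN)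
  lt_of_notMem_range i j hj := ha <| by
    rw [Fin.range_castLE, Set.mem_ofPred_eq, not_lt] at hj
    exact i.isLt.trans_le hj

end SmallestValues

section Extremal

variable {𝕜 ι κ : Type*} [RCLike 𝕜] [Fintype ι] [LinearOrder ι] [Fintype κ] [DecidableEq κ]
  {a : κ → ℝ} {b : ι → ℝ} {e : ι → κ}

theorem eq_zero_and_norm_sq_eq_of_isFeasible_diagonal (ha : ∀ j, 0 < a j)
    (he : EnumeratesSmallest a e) (hb : StrictAnti b) {Q : Matrix ι κ 𝕜}
    (hfeas : IsFeasible (diagonal fun j => (a j : 𝕜)) (diagonal fun i => (b i : 𝕜)) Q)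
    (henergy : (Q * Qᴴ).trace ≤ ((∑ i, a (e i) * b i : ℝ) : 𝕜)) (i : ι) :
    (∀ j, j ≠ e i → Q i j = 0) ∧ ‖Q i (e i)‖ ^ 2 = a (e i) * b i := by
  obtain ⟨W, hW, htri⟩ := exists_unitary_mul_isUpperTriangular (Q.submatrix id e)
  have energy_le : ∑ i, ∑ j, ‖(W * Q) i j‖ ^ 2 * (a j)⁻¹ * a j ≤ ∑ i, a (e i) * b i := by
    rw [← trace_unitary_mul_mul_conjTranspose hW, trace_mul_conjTranspose_self,
      RCLike.ofReal_le_ofReal] at henergy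
    simpa only [inv_mul_cancel_right₀ (ha _).ne'] using henergy
  obtain ⟨W_diag, rows⟩ := eq_one_and_row_sum_eq_of_sum_mul_le (fun i => ha (e i)) he.strictMono hb
    (R := fun i j => ‖(W * Q) i j‖ ^ 2 * (a j)⁻¹)
    (fun i j => mul_nonneg (sq_nonneg _) (inv_nonneg.2 (ha j).le))
    (fun i j hij => he.le_of_isUpperTriangular (T := W * Q) htri fun h0 =>
      hij (by simp [h0]))
    (map_norm_sq_mem_doublyStochastic hW) (hfeas.mul_left W |>.diag_le fun j => (ha j).ne')
    energy_le
  simp only [norm_mul_apply_of_map_norm_sq_eq_one W_diag] at rows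
  obtain ⟨row_sum, support⟩ := rows i
  have off_diag (j) (hj : j ≠ e i) : Q i j = 0 := by
    by_contra hQ
    exact hj (he.eq_of_apply_eq (support j (by simp [hQ, (ha j).ne'])))
  refine ⟨off_diag, ?_⟩
  rw [Fintype.sum_eq_single (e i) fun j hj => by simp [off_diag j hj]] at row_sum
  rw [← row_sum, mul_comm, inv_mul_cancel_right₀ (ha (e i)).ne']

theorem stmt1_general (ha : ∀ j, 0 < a j) (he : EnumeratesSmallest a e) (hb : StrictAnti b)
    {A U : Matrix κ κ 𝕜} (hU : U ∈ unitaryGroup κ 𝕜)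
    (hA : A = U * diagonal (fun j => (a j : 𝕜)) * Uᴴ)
    {B V : Matrix ι ι 𝕜} (hV : V ∈ unitaryGroup ι 𝕜)
    (hB : B = V * diagonal (fun i => (b i : 𝕜)) * Vᴴ)
    {P : Matrix ι κ 𝕜} (hfeas : IsFeasible A B P)
    (henergy : (P * Pᴴ).trace ≤ ((∑ i, a (e i) * b i : ℝ) : 𝕜)) :
    ∃ D : Matrix ι κ 𝕜, (∀ i j, j ≠ e i → D i j = 0) ∧
      (∀ i, ‖D i (e i)‖ = √(a (e i) * b i)) ∧ P = V * D * Uᴴ := by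
  subst hA hB
  have hVV : V * Vᴴ = 1 := mem_unitaryGroup_iff.1 hV
  have hVV' : Vᴴ * V = 1 := mem_unitaryGroup_iff'.1 hV
  have hUU : U * Uᴴ = 1 := mem_unitaryGroup_iff.1 hU
  have feas : IsFeasible (diagonal fun j => (a j : 𝕜)) (diagonal fun i => (b i : 𝕜))
      (Vᴴ * (P * U)) := by
    convert (IsFeasible.mul_right hU hfeas).mul_left Vᴴ using 1
    rw [conjTranspose_conjTranspose, Matrix.mul_assoc, Matrix.mul_assoc, hVV', Matrix.mul_one,
      ← Matrix.mul_assoc, hVV', Matrix.one_mul]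
  have energy : ((Vᴴ * (P * U)) * (Vᴴ * (P * U))ᴴ).trace ≤ ((∑ i, a (e i) * b i : ℝ) : 𝕜) := by
    rwa [← star_eq_conjTranspose V, trace_unitary_mul_mul_conjTranspose (Unitary.star_mem hV),
      mul_unitary_mul_conjTranspose hU]
  have extremal := eq_zero_and_norm_sq_eq_of_isFeasible_diagonal ha he hb feas energy
  refine ⟨Vᴴ * (P * U), fun i => (extremal i).1, fun i => ?_, ?_⟩
  · rw [← (extremal i).2, Real.sqrt_sq (norm_nonneg _)]
  · rw [← Matrix.mul_assoc V, hVV, Matrix.one_mul, Matrix.mul_assoc, hUU, Matrix.mul_one]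

end Extremal

/-- Theorem 1 (uniqueness part): when `A` and `B` have distinct eigenvalues, every feasible
`P` (i.e. `P A⁻¹ Pᴴ ⪰ B`) attaining the minimal energy `Σ_i (D_A)_{ii}(D_B)_{ii}` is of the
form `U_B D U_Aᴴ` with `D` rectangular diagonal and `|D_{ii}| = √((D_A)_{ii}(D_B)_{ii})`. -/
theorem stmt1 (N n : ℕ) (hn : 1 ≤ n) (hnN : n ≤ N)
    (A : Matrix (Fin N) (Fin N) ℂ) (hA : A.PosDef)
    (UA : Matrix (Fin N) (Fin N) ℂ) (hUA : UA ∈ Matrix.unitaryGroup (Fin N) ℂ)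
    (DA : Fin N → ℝ) (hDApos : ∀ i, 0 < DA i) (hDAmono : StrictMono DA)
    (hAdec : A = UA * Matrix.diagonal (fun i => (DA i : ℂ)) * UAᴴ)
    (Bm : Matrix (Fin n) (Fin n) ℂ) (hB : Bm.PosDef)
    (UB : Matrix (Fin n) (Fin n) ℂ) (hUB : UB ∈ Matrix.unitaryGroup (Fin n) ℂ)
    (DB : Fin n → ℝ) (hDBpos : ∀ i, 0 < DB i) (hDBanti : StrictAnti DB)
    (hBdec : Bm = UB * Matrix.diagonal (fun i => (DB i : ℂ)) * UBᴴ)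
    (P : Matrix (Fin n) (Fin N) ℂ)
    (hfeas : (P * A⁻¹ * Pᴴ - Bm).PosSemidef)
    (hmin : (P * Pᴴ).trace = ((∑ i : Fin n, DA (Fin.castLE hnN i) * DB i : ℝ) : ℂ)) :
    ∃ D : Matrix (Fin n) (Fin N) ℂ,
      (∀ (i : Fin n) (j : Fin N), (i : ℕ) ≠ (j : ℕ) → D i j = 0) ∧
      (∀ i : Fin n, ‖D i (Fin.castLE hnN i)‖ =
        Real.sqrt (DA (Fin.castLE hnN i) * DB i)) ∧
      P = UB * D * UAᴴ := by
  obtain ⟨D, hD, hnorm, hP⟩ := stmt1_general hDApos (enumeratesSmallest_castLE hnN hDAmono)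
    hDBanti hUA hAdec hUB hBdec hfeas hmin.le
  exact ⟨D, fun i j hij => hD i j fun h => hij (by simp [h]), hnorm, hP⟩
end

section
/- Let n_T, n_R ≥ 1 and B ≥ n_T be integers, let 𝓘_T ∈ ℂ^{n_T×n_T}, 𝓘_R ∈ ℂ^{n_R×n_R}, S_Q ∈ ℂ^{B×B}, S_R ∈ ℂ^{n_R×n_R} all be Hermitian positive definite, and let 𝒫 > 0. Write eigendecompositions 𝓘_T^T = U_T D_T U_T^H with U_T unitary and D_T real diagonal in descending order, and S_Q^T = U_Q D_Q U_Q^H with U_Q unitary and D_Q real diagonal in ascending order; set α_i = (D_T)_{i,i}(D_Q)_{i,i} for i = 1,…,n_T. For P ∈ ℂ^{n_T×B} of rank n_T, define J(P) = tr[(𝓘_T^T ⊗ 𝓘_R) · ((P^T ⊗ I_{n_R})^H (S_Q^T ⊗ S_R)^{-1} (P^T ⊗ I_{n_R}))^{-1}]. Let D_P ∈ ℂ^{n_T×B} be the rectangular diagonal matrix with (D_P)_{i,i} = √(𝒫 √α_i / Σ_{j=1}^{n_T} √α_j), and let P_opt be the entrywise complex conjugate of U_T D_P U_Q^H. Then P_opt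 has rank n_T, tr(P_opt P_opt^H) = 𝒫, J(P_opt) = tr(𝓘_R S_R) · (Σ_{i=1}^{n_T} √α_i)² / 𝒫, and J(P) ≥ J(P_opt) for every P ∈ ℂ^{n_T×B} of rank n_T with tr(P P^H) ≤ 𝒫. (Theorem 4.) -/
open Matrix Finset
open scoped ComplexOrder Kronecker

/-- The cost `J(P) = tr[(𝓘_Tᵀ ⊗ 𝓘_R) ((Pᵀ ⊗ I)ᴴ (S_Qᵀ ⊗ S_R)⁻¹ (Pᵀ ⊗ I))⁻¹]`. -/
noncomputable def Jcost (nT nR B : ℕ) (IT : Matrix (Fin nT) (Fin nT) ℂ)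
    (IR : Matrix (Fin nR) (Fin nR) ℂ) (SQ : Matrix (Fin B) (Fin B) ℂ)
    (SR : Matrix (Fin nR) (Fin nR) ℂ) (P : Matrix (Fin nT) (Fin B) ℂ) : ℂ :=
  ((ITᵀ ⊗ₖ IR) *
    ((Pᵀ ⊗ₖ (1 : Matrix (Fin nR) (Fin nR) ℂ))ᴴ * (SQᵀ ⊗ₖ SR)⁻¹ *
      (Pᵀ ⊗ₖ (1 : Matrix (Fin nR) (Fin nR) ℂ)))⁻¹).trace

/-!
With `t = (𝓘_Tᵀ)^(1/2)`, `q = (S_Qᵀ)^(1/2)`, `C = Pᵀ` and `G = Cᴴ q⁻² C`, the cost factors as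
`J(P) = tr(𝓘_R S_R) tr(t² G⁻¹)`. The matrix `X = q⁻¹ C G^(-1/2)` has orthonormal columns and
`t Xᴴ q X = (G^(-1/2) t)ᴴ (Cᴴ X)`, so Cauchy–Schwarz for the Frobenius inner product gives
`tr(t Xᴴ q X)² ≤ tr(t² G⁻¹) tr(P Pᴴ)`. In the eigenbases of `t` and `q` the left side pairs the
descending eigenvalues of `t` with averages of the ascending eigenvalues of `q`, the weights being
doubly substochastic because `X` is an isometry. Rearrangement then bounds it below by
`(∑ᵢ √αᵢ)²`, the value which `P_opt` attains.
-/

section Rearrangement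

variable {ι κ R : Type*} [CommRing R] [LinearOrder R] [IsStrictOrderedRing R]

theorem sum_mul_nonneg_of_antitoneOn [LinearOrder ι] (s : Finset ι) {a d : ι → R}
    (ha : AntitoneOn a s) (ha0 : ∀ i ∈ s, 0 ≤ a i)
    (hd : ∀ k ∈ s, 0 ≤ ∑ i ∈ s with i ≤ k, d i) : 0 ≤ ∑ i ∈ s, a i * d i := by
  induction s using Finset.induction_on_max generalizing a with
  | empty => simp
  | insert m s hm ih =>
    have hms : m ∉ s := fun h => (hm m h).false
    have hsm : (insert m s).filter (· ≤ m) = insert m s :=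
      filter_true_of_mem (by simpa using fun i hi => (hm i hi).le)
    have hshift : 0 ≤ ∑ i ∈ s, (a i - a m) * d i := by
      refine ih (fun i hi j hj hij => ?_) (fun i hi => ?_) fun k hk => ?_
      · exact sub_le_sub_right (ha (by simp [hi]) (by simp [hj]) hij) _
      · exact sub_nonneg.2 (ha (by simp [hi]) (by simp) (hm i hi).le)
      · simpa [filter_insert, (hm k hk).not_ge] using hd k (mem_insert_of_mem hk)
    have htotal : 0 ≤ a m * ∑ i ∈ insert m s, d i :=
      mul_nonneg (ha0 m (by simp)) (by simpa only [hsm] using hd m (by simp))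
    calc 0 ≤ ∑ i ∈ s, (a i - a m) * d i + a m * ∑ i ∈ insert m s, d i := add_nonneg hshift htotal
      _ = ∑ i ∈ insert m s, a i * d i := by
        simp only [sum_insert hms, sub_mul, sum_sub_distrib, mul_add, ← mul_sum]
        ring

theorem sum_le_sum_mul_of_separated [Fintype κ] (s : Finset κ) {b w : κ → R} {β : R}
    (hs : ∀ j ∈ s, b j ≤ β) (hsc : ∀ j ∉ s, β ≤ b j) (hw0 : ∀ j, 0 ≤ w j) (hw1 : ∀ j, w j ≤ 1)
    (hw : ∑ j, w j = #s) : ∑ j ∈ s, b j ≤ ∑ j, b j * w j := by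
  classical
  have hpos : 0 ≤ ∑ j, (b j - β) * (w j - if j ∈ s then 1 else 0) := by
    refine sum_nonneg fun j _ => ?_
    split_ifs with hj
    · exact mul_nonneg_of_nonpos_of_nonpos (sub_nonpos.2 (hs j hj)) (sub_nonpos.2 (hw1 j))
    · simpa using mul_nonneg (sub_nonneg.2 (hsc j hj)) (hw0 j)
  have hexpand : ∑ j, (b j - β) * (w j - if j ∈ s then 1 else 0)
      = ∑ j, b j * w j - ∑ j ∈ s, b j := by
    simp only [mul_sub, sub_mul, mul_ite, mul_one, mul_zero, sum_sub_distrib, ← mul_sum, hw,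
      sum_ite_mem, univ_inter, sum_const, nsmul_eq_mul]
    ring
  exact sub_nonneg.1 (hexpand ▸ hpos)

theorem sum_mul_initialSeg_le_sum_mul_sum [LinearOrder ι] [LinearOrder κ] [Fintype ι] [Fintype κ]
    (e : ι ≤i κ) {a : ι → R} {b : κ → R} {c : ι → κ → R} (ha : Antitone a) (ha0 : ∀ i, 0 ≤ a i)
    (hb : Monotone b) (hc : ∀ i j, 0 ≤ c i j) (hrow : ∀ i, ∑ j, c i j = 1)
    (hcol : ∀ j, ∑ i, c i j ≤ 1) : ∑ i, a i * b (e i) ≤ ∑ i, a i * ∑ j, b j * c i j := by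
  have hpartial (k : ι) :
      ∑ i with i ≤ k, b (e i) ≤ ∑ i with i ≤ k, ∑ j, b j * c i j := by
    have hmem (j : κ) : j ∈ ({i | i ≤ k} : Finset ι).map e.toEmbedding ↔ j ≤ e k := by
      simp only [mem_map, mem_filter, mem_univ, true_and]
      constructor
      · rintro ⟨i, hi, rfl⟩
        exact e.le_iff_le.2 hi
      · intro hj
        obtain ⟨i, rfl⟩ := e.mem_range_of_le hj
        exact ⟨i, e.le_iff_le.1 hj, rfl⟩
    have := sum_le_sum_mul_of_separated (({i | i ≤ k} : Finset ι).map e.toEmbedding)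
      (b := b) (w := fun j => ∑ i with i ≤ k, c i j) (β := b (e k))
      (fun j hj => hb ((hmem j).1 hj)) (fun j hj => hb (not_le.1 (mt (hmem j).2 hj)).le)
      (fun j => sum_nonneg fun i _ => hc i j)
      (fun j => (sum_le_univ_sum_of_nonneg fun i => hc i j).trans (hcol j))
      (by rw [sum_comm]; simp [hrow])
    simp only [sum_map, mul_sum, sum_comm (s := univ)] at this
    exact this
  have hnonneg := sum_mul_nonneg_of_antitoneOn univ
    (d := fun i => ∑ j, b j * c i j - b (e i)) (ha.antitoneOn _) (fun i _ => ha0 i)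
    fun k _ => by simpa only [sum_sub_distrib, sub_nonneg] using hpartial k
  simpa only [mul_sub, sum_sub_distrib, sub_nonneg] using hnonneg

end Rearrangement

section Matrix

open scoped MatrixOrder

theorem mulVec_injective_of_rank_eq_card {m n K : Type*} [Field K] [Fintype m] {C : Matrix n m K}
    (hC : C.rank = Fintype.card m) : Function.Injective C.mulVec := by
  rw [mulVec_injective_iff, linearIndependent_iff_card_eq_finrank_span, Set.finrank,
    ← rank_eq_finrank_span_cols, hC]

theorem trace_transpose_conjTranspose_mul_transpose {m n R : Type*} [Fintype m] [Fintype n]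
    [CommSemiring R] [StarRing R] (P : Matrix m n R) : (Pᵀᴴ * Pᵀ).trace = (P * Pᴴ).trace := by
  rw [← trace_transpose (P * Pᴴ), transpose_mul]
  rfl

variable {m n 𝕜 : Type*} [Fintype n] [RCLike 𝕜]

theorem ofReal_sum_norm_sq_col (X : Matrix n m 𝕜) (i : m) :
    ((∑ j, ‖X j i‖ ^ 2 : ℝ) : 𝕜) = (Xᴴ * X) i i := by
  simp [mul_apply, RCLike.conj_mul]

theorem sum_norm_sq_col_eq_one [DecidableEq m] {X : Matrix n m 𝕜} (hX : Xᴴ * X = 1) (i : m) :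
    ∑ j, ‖X j i‖ ^ 2 = 1 := by
  have := ofReal_sum_norm_sq_col X i
  rw [hX, one_apply_eq] at this
  exact_mod_cast this

theorem trace_mul_nonneg_of_posSemidef {A B : Matrix n n 𝕜} (hA : A.PosSemidef)
    (hB : B.PosSemidef) : 0 ≤ (A * B).trace := by
  classical
  obtain ⟨R, rfl⟩ := CStarAlgebra.nonneg_iff_eq_star_mul_self.1 hA.nonneg
  rw [Matrix.mul_assoc, trace_mul_comm]
  exact (hB.mul_mul_conjTranspose_same R).trace_nonneg

theorem exists_posDef_mul_self_eq {G : Matrix n n 𝕜} (hG : G.PosDef) :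
    ∃ H : Matrix n n 𝕜, H.PosDef ∧ H * H = G := by
  classical
  have hsq : CFC.sqrt G * CFC.sqrt G = G := CFC.sqrt_mul_sqrt_self G hG.posSemidef.nonneg
  refine ⟨CFC.sqrt G, ?_, hsq⟩
  refine (nonneg_iff_posSemidef.1 (CFC.sqrt_nonneg G)).posDef_iff_isUnit.2 ?_
  exact isUnit_of_mul_isUnit_left (hsq ▸ hG.isUnit)

section OfEigenvalues

variable [DecidableEq n]

/-- The Hermitian matrix `U diag(d) Uᴴ`; for unitary `U` this is the matrix with eigenvalues `d`
and eigenvectors the columns of `U`. -/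
def ofEigenvalues (U : Matrix n n 𝕜) (d : n → ℝ) : Matrix n n 𝕜 :=
  U * diagonal (fun i => (d i : 𝕜)) * Uᴴ

variable {U : Matrix n n 𝕜} {d d' : n → ℝ}

theorem isHermitian_ofEigenvalues (U : Matrix n n 𝕜) (d : n → ℝ) :
    (ofEigenvalues U d).IsHermitian :=
  isHermitian_mul_mul_conjTranspose U (isHermitian_diagonal_of_self_adjoint _ (by ext; simp))

theorem posDef_ofEigenvalues_iff (hU : U ∈ unitaryGroup n 𝕜) :
    (ofEigenvalues U d).PosDef ↔ ∀ i, 0 < d i := by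
  rw [ofEigenvalues, ← star_eq_conjTranspose,
    Matrix.IsUnit.posDef_star_right_conjugate_iff (.of_mul_eq_one _ (mem_unitaryGroup_iff.1 hU)),
    posDef_diagonal_iff]
  simp

theorem ofEigenvalues_one (hU : U ∈ unitaryGroup n 𝕜) : ofEigenvalues U 1 = 1 := by
  simpa [ofEigenvalues, star_eq_conjTranspose] using mem_unitaryGroup_iff.1 hU

theorem ofEigenvalues_mul (hU : U ∈ unitaryGroup n 𝕜) :
    ofEigenvalues U d * ofEigenvalues U d' = ofEigenvalues U (d * d') := by
  have hUU : Uᴴ * U = 1 := mem_unitaryGroup_iff'.1 hU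
  calc ofEigenvalues U d * ofEigenvalues U d'
      = U * (diagonal (fun i => (d i : 𝕜)) * (Uᴴ * U) * diagonal (fun i => (d' i : 𝕜))) * Uᴴ := by
        simp only [ofEigenvalues, Matrix.mul_assoc]
    _ = ofEigenvalues U (d * d') := by
        simp [hUU, ofEigenvalues]

theorem ofEigenvalues_inv (hU : U ∈ unitaryGroup n 𝕜) (hd : ∀ i, d i ≠ 0) :
    (ofEigenvalues U d)⁻¹ = ofEigenvalues U d⁻¹ := by
  refine inv_eq_right_inv ?_
  rw [ofEigenvalues_mul hU, ← ofEigenvalues_one hU]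
  congr
  ext i
  exact mul_inv_cancel₀ (hd i)

theorem trace_ofEigenvalues (hU : U ∈ unitaryGroup n 𝕜) :
    (ofEigenvalues U d).trace = ((∑ i, d i : ℝ) : 𝕜) := by
  have hUU : Uᴴ * U = 1 := mem_unitaryGroup_iff'.1 hU
  rw [ofEigenvalues, trace_mul_comm, ← Matrix.mul_assoc, hUU, Matrix.one_mul, trace_diagonal]
  push_cast
  rfl

end OfEigenvalues

variable [Fintype m]

theorem re_trace_conjTranspose_mul_sq_le (A B : Matrix m n 𝕜) :
    RCLike.re (Aᴴ * B).trace ^ 2 ≤ RCLike.re (Aᴴ * A).trace * RCLike.re (Bᴴ * B).trace := by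
  have hinner (M N : Matrix m n 𝕜) :
      inner 𝕜 (WithLp.toLp 2 (vec M)) (WithLp.toLp 2 (vec N)) = (Mᴴ * N).trace := by
    rw [EuclideanSpace.inner_toLp_toLp, dotProduct_comm, star_vec_dotProduct_vec]
  have hcs := inner_mul_inner_self_le (𝕜 := 𝕜) (WithLp.toLp 2 (vec A)) (WithLp.toLp 2 (vec B))
  rw [norm_inner_symm (WithLp.toLp 2 (vec B)), ← sq, hinner, hinner, hinner] at hcs
  exact (sq_le_sq.2 (by simpa using RCLike.abs_re_le_norm (Aᴴ * B).trace)).trans hcs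

section Isometry

variable [DecidableEq m] {X : Matrix n m 𝕜}

theorem posSemidef_one_sub_mul_conjTranspose [DecidableEq n] (hX : Xᴴ * X = 1) :
    (1 - X * Xᴴ).PosSemidef := by
  refine nonneg_iff_posSemidef.1 (IsStarProjection.one_sub_nonneg ⟨?_, ?_⟩)
  · rw [IsIdempotentElem, Matrix.mul_assoc, ← Matrix.mul_assoc Xᴴ, hX, Matrix.one_mul]
  · exact isHermitian_mul_conjTranspose_self X

theorem re_trace_conjTranspose_mul_isometry_le (hX : Xᴴ * X = 1) (C : Matrix n m 𝕜) :
    RCLike.re ((Cᴴ * X)ᴴ * (Cᴴ * X)).trace ≤ RCLike.re (Cᴴ * C).trace := by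
  classical
  have hproj := posSemidef_one_sub_mul_conjTranspose hX
  have hnonneg := (hproj.conjTranspose_mul_mul_same C).trace_nonneg
  have hcycle : ((Cᴴ * X)ᴴ * (Cᴴ * X)).trace = (Cᴴ * (X * Xᴴ) * C).trace := by
    rw [trace_mul_comm]
    simp only [conjTranspose_mul, conjTranspose_conjTranspose, Matrix.mul_assoc]
  rw [Matrix.mul_sub, Matrix.sub_mul, Matrix.mul_one, trace_sub, ← hcycle] at hnonneg
  simpa using (RCLike.nonneg_iff.1 hnonneg).1

theorem sum_norm_sq_row_le_one (hX : Xᴴ * X = 1) (j : n) : ∑ i, ‖X j i‖ ^ 2 ≤ 1 := by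
  classical
  have hdiag := (posSemidef_one_sub_mul_conjTranspose hX).diag_nonneg (i := j)
  have hrow := ofReal_sum_norm_sq_col Xᴴ j
  simp only [conjTranspose_apply, norm_star, conjTranspose_conjTranspose] at hrow
  rw [Matrix.sub_apply, one_apply_eq, ← hrow, sub_nonneg] at hdiag
  exact_mod_cast hdiag

theorem re_trace_diagonal_mul_conjTranspose_mul_diagonal_mul [DecidableEq n] (a : m → ℝ)
    (b : n → ℝ) (X : Matrix n m 𝕜) :
    RCLike.re (diagonal (fun i => (a i : 𝕜)) * (Xᴴ * diagonal (fun j => (b j : 𝕜)) * X)).trace =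
      ∑ i, a i * ∑ j, b j * ‖X j i‖ ^ 2 := by
  have hentry (i : m) : (Xᴴ * diagonal (fun j => (b j : 𝕜)) * X) i i =
      ((∑ j, b j * ‖X j i‖ ^ 2 : ℝ) : 𝕜) := by
    rw [mul_apply]
    push_cast
    refine sum_congr rfl fun j _ => ?_
    rw [mul_diagonal, conjTranspose_apply, RCLike.star_def, mul_right_comm, RCLike.conj_mul,
      mul_comm]
  rw [trace, map_sum]
  refine sum_congr rfl fun i _ => ?_
  rw [diag_apply, diagonal_mul, hentry, ← RCLike.ofReal_mul, RCLike.ofReal_re]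

end Isometry

theorem sum_mul_initialSeg_le_re_trace [LinearOrder m] [LinearOrder n] (e : m ≤i n)
    {U : Matrix m m 𝕜} (hU : U ∈ unitaryGroup m 𝕜) {V : Matrix n n 𝕜} (hV : V ∈ unitaryGroup n 𝕜)
    {X : Matrix n m 𝕜} (hX : Xᴴ * X = 1) {a : m → ℝ} (ha : Antitone a) (ha0 : ∀ i, 0 ≤ a i)
    {b : n → ℝ} (hb : Monotone b) :
    ∑ i, a i * b (e i) ≤ RCLike.re (ofEigenvalues U a * (Xᴴ * ofEigenvalues V b * X)).trace := by
  set W : Matrix n m 𝕜 := Vᴴ * X * U with hW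
  have hW1 : Wᴴ * W = 1 := by
    have hVV : V * Vᴴ = 1 := mem_unitaryGroup_iff.1 hV
    have hUU : Uᴴ * U = 1 := mem_unitaryGroup_iff'.1 hU
    calc Wᴴ * W = Uᴴ * (Xᴴ * (V * Vᴴ) * X) * U := by
          simp only [hW, conjTranspose_mul, conjTranspose_conjTranspose, Matrix.mul_assoc]
      _ = 1 := by rw [hVV, Matrix.mul_one, hX, Matrix.mul_one, hUU]
  have htrace : (ofEigenvalues U a * (Xᴴ * ofEigenvalues V b * X)).trace =
      (diagonal (fun i => (a i : 𝕜)) * (Wᴴ * diagonal (fun j => (b j : 𝕜)) * W)).trace := by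
    rw [ofEigenvalues, Matrix.mul_assoc, Matrix.mul_assoc, trace_mul_comm]
    simp only [hW, ofEigenvalues, conjTranspose_mul, conjTranspose_conjTranspose, Matrix.mul_assoc]
  rw [htrace, re_trace_diagonal_mul_conjTranspose_mul_diagonal_mul]
  exact sum_mul_initialSeg_le_sum_mul_sum e ha ha0 hb (fun i j => sq_nonneg ‖W j i‖)
    (sum_norm_sq_col_eq_one hW1) (sum_norm_sq_row_le_one hW1)

theorem exists_isometry_re_trace_sq_le [DecidableEq m] [DecidableEq n] {t : Matrix m m 𝕜}
    (ht : t.IsHermitian) {q : Matrix n n 𝕜} (hq : q.PosDef) {C : Matrix n m 𝕜}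
    (hG : (Cᴴ * (q * q)⁻¹ * C).PosDef) :
    ∃ X : Matrix n m 𝕜, Xᴴ * X = 1 ∧ RCLike.re (t * (Xᴴ * q * X)).trace ^ 2 ≤
      RCLike.re (t * t * (Cᴴ * (q * q)⁻¹ * C)⁻¹).trace * RCLike.re (Cᴴ * C).trace := by
  obtain ⟨H, hH, hHH⟩ := exists_posDef_mul_self_eq hG
  have hHdet := (isUnit_iff_isUnit_det H).1 hH.isUnit
  have hqdet := (isUnit_iff_isUnit_det q).1 hq.isUnit
  have hXadj : (q⁻¹ * C * H⁻¹)ᴴ = H⁻¹ * Cᴴ * q⁻¹ := by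
    rw [conjTranspose_mul, conjTranspose_mul, hH.isHermitian.inv.eq, hq.isHermitian.inv.eq,
      Matrix.mul_assoc]
  have hX : (q⁻¹ * C * H⁻¹)ᴴ * (q⁻¹ * C * H⁻¹) = 1 := by
    calc (q⁻¹ * C * H⁻¹)ᴴ * (q⁻¹ * C * H⁻¹)
        = H⁻¹ * (Cᴴ * (q * q)⁻¹ * C) * H⁻¹ := by
          rw [hXadj]
          simp only [Matrix.mul_inv_rev, Matrix.mul_assoc]
      _ = 1 := by
          rw [← hHH, nonsing_inv_mul_cancel_left _ _ hHdet, mul_nonsing_inv _ hHdet]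
  refine ⟨q⁻¹ * C * H⁻¹, hX, ?_⟩
  set X := q⁻¹ * C * H⁻¹
  have hcross : t * (Xᴴ * q * X) = (H⁻¹ * t)ᴴ * (Cᴴ * X) := by
    rw [hXadj, nonsing_inv_mul_cancel_right _ _ hqdet, conjTranspose_mul, ht.eq,
      hH.isHermitian.inv.eq]
    simp only [Matrix.mul_assoc]
  have hweight : ((H⁻¹ * t)ᴴ * (H⁻¹ * t)).trace = (t * t * (Cᴴ * (q * q)⁻¹ * C)⁻¹).trace := by
    rw [← hHH, Matrix.mul_inv_rev, conjTranspose_mul, ht.eq, hH.isHermitian.inv.eq,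
      ← Matrix.mul_assoc, trace_mul_comm]
    simp only [Matrix.mul_assoc]
  have hweight_nonneg : 0 ≤ RCLike.re ((H⁻¹ * t)ᴴ * (H⁻¹ * t)).trace :=
    (RCLike.nonneg_iff.1 (posSemidef_conjTranspose_mul_self (H⁻¹ * t)).trace_nonneg).1
  rw [hcross, ← hweight]
  exact (re_trace_conjTranspose_mul_sq_le _ _).trans
    (mul_le_mul_of_nonneg_left (re_trace_conjTranspose_mul_isometry_le hX C) hweight_nonneg)

theorem sum_sqrt_sq_le_re_trace_mul_re_trace [LinearOrder m] [LinearOrder n] (e : m ≤i n)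
    {U : Matrix m m 𝕜} (hU : U ∈ unitaryGroup m 𝕜) {V : Matrix n n 𝕜} (hV : V ∈ unitaryGroup n 𝕜)
    {s : m → ℝ} (hs : Antitone s) (hs0 : ∀ i, 0 ≤ s i) {d : n → ℝ} (hd : Monotone d)
    (hd0 : ∀ j, 0 < d j) {C : Matrix n m 𝕜} (hC : Function.Injective C.mulVec) :
    (∑ i, √(s i * d (e i))) ^ 2 ≤
      RCLike.re (ofEigenvalues U s * (Cᴴ * (ofEigenvalues V d)⁻¹ * C)⁻¹).trace *
        RCLike.re (Cᴴ * C).trace := by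
  have hsqrt_s : ofEigenvalues U (fun i => √(s i)) * ofEigenvalues U (fun i => √(s i)) =
      ofEigenvalues U s := by
    rw [ofEigenvalues_mul hU]
    exact congrArg _ (funext fun i => Real.mul_self_sqrt (hs0 i))
  have hsqrt_d : ofEigenvalues V (fun j => √(d j)) * ofEigenvalues V (fun j => √(d j)) =
      ofEigenvalues V d := by
    rw [ofEigenvalues_mul hV]
    exact congrArg _ (funext fun j => Real.mul_self_sqrt (hd0 j).le)
  obtain ⟨X, hX, hle⟩ := exists_isometry_re_trace_sq_le (C := C)
    (isHermitian_ofEigenvalues U fun i => √(s i))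
    ((posDef_ofEigenvalues_iff hV).2 fun j => Real.sqrt_pos.2 (hd0 j))
    (by simpa only [hsqrt_d] using
      ((posDef_ofEigenvalues_iff hV).2 hd0).inv.conjTranspose_mul_mul_same hC)
  rw [hsqrt_s, hsqrt_d] at hle
  refine le_trans (pow_le_pow_left₀ (sum_nonneg fun i _ => Real.sqrt_nonneg _) ?_ 2) hle
  simp only [Real.sqrt_mul (hs0 _)]
  exact sum_mul_initialSeg_le_re_trace e hU hV hX (fun _ _ h => Real.sqrt_le_sqrt (hs h))
    (fun i => Real.sqrt_nonneg _) fun _ _ h => Real.sqrt_le_sqrt (hd h)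

theorem sum_sqrt_sq_div_le_re_trace [LinearOrder m] [LinearOrder n] (e : m ≤i n)
    {U : Matrix m m 𝕜} (hU : U ∈ unitaryGroup m 𝕜) {V : Matrix n n 𝕜} (hV : V ∈ unitaryGroup n 𝕜)
    {s : m → ℝ} (hs : Antitone s) (hs0 : ∀ i, 0 < s i) {d : n → ℝ} (hd : Monotone d)
    (hd0 : ∀ j, 0 < d j) {C : Matrix n m 𝕜} (hC : C.rank = Fintype.card m) {β : ℝ} (hβ : 0 < β)
    (hCβ : RCLike.re (Cᴴ * C).trace ≤ β) :
    (∑ i, √(s i * d (e i))) ^ 2 / β ≤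
      RCLike.re (ofEigenvalues U s * (Cᴴ * (ofEigenvalues V d)⁻¹ * C)⁻¹).trace := by
  have hinj := mulVec_injective_of_rank_eq_card hC
  have hG := ((posDef_ofEigenvalues_iff hV).2 hd0).inv.conjTranspose_mul_mul_same hinj
  have hcost := trace_mul_nonneg_of_posSemidef ((posDef_ofEigenvalues_iff hU).2 hs0).posSemidef
    hG.inv.posSemidef
  rw [div_le_iff₀ hβ]
  exact (sum_sqrt_sq_le_re_trace_mul_re_trace e hU hV hs (fun i => (hs0 i).le) hd hd0 hinj).trans
    (mul_le_mul_of_nonneg_left hCβ (RCLike.nonneg_iff.1 hcost).1)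

end Matrix

section RectDiagonal

variable {m n 𝕜 : Type*} [Fintype n] [DecidableEq n] [RCLike 𝕜]

/-- The rectangular diagonal matrix of the paper (`D_P`), with the embedding `e` of row indices into
column indices made explicit: row `i` has the single entry `p i`, in column `e i`. -/
def rectDiagonal (𝕜 : Type*) [RCLike 𝕜] (e : m → n) (p : m → ℝ) : Matrix m n 𝕜 :=
  of fun i j => if j = e i then (p i : 𝕜) else 0

theorem rectDiagonal_mul_diagonal_mul_conjTranspose [DecidableEq m] {e : m → n}
    (he : Function.Injective e) (p : m → ℝ) (d : n → ℝ) :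
    rectDiagonal 𝕜 e p * diagonal (fun j => (d j : 𝕜)) * (rectDiagonal 𝕜 e p)ᴴ =
      diagonal fun i => ((p i ^ 2 * d (e i) : ℝ) : 𝕜) := by
  ext i k
  rw [mul_apply, sum_eq_single (e i)]
  · by_cases hik : i = k
    · subst hik
      simp only [rectDiagonal, mul_diagonal, of_apply, ↓reduceIte, conjTranspose_apply,
        RCLike.star_def, RCLike.conj_ofReal, map_mul, map_pow, diagonal_apply_eq]
      ring
    · simp [rectDiagonal, hik, he.eq_iff]
  · intro j _ hj
    simp [rectDiagonal, hj]
  · simp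

variable [Fintype m] [DecidableEq m] {e : m → n} {U : Matrix m m 𝕜} {V : Matrix n n 𝕜}
  {p : m → ℝ} {d : n → ℝ}

theorem mul_rectDiagonal_mul_ofEigenvalues_mul_conjTranspose (he : Function.Injective e)
    (U : Matrix m m 𝕜) (hV : V ∈ unitaryGroup n 𝕜) (p : m → ℝ) (d : n → ℝ) :
    U * rectDiagonal 𝕜 e p * Vᴴ * ofEigenvalues V d * (U * rectDiagonal 𝕜 e p * Vᴴ)ᴴ =
      ofEigenvalues U fun i => p i ^ 2 * d (e i) := by
  have hVV : Vᴴ * V = 1 := mem_unitaryGroup_iff'.1 hV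
  calc U * rectDiagonal 𝕜 e p * Vᴴ * ofEigenvalues V d * (U * rectDiagonal 𝕜 e p * Vᴴ)ᴴ
      = U * (rectDiagonal 𝕜 e p * (Vᴴ * V) * diagonal (fun j => (d j : 𝕜)) * (Vᴴ * V) *
          (rectDiagonal 𝕜 e p)ᴴ) * Uᴴ := by
        simp only [ofEigenvalues, conjTranspose_mul, conjTranspose_conjTranspose, Matrix.mul_assoc]
    _ = ofEigenvalues U fun i => p i ^ 2 * d (e i) := by
        rw [hVV, Matrix.mul_one, Matrix.mul_one, rectDiagonal_mul_diagonal_mul_conjTranspose he,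
          ofEigenvalues]

theorem mul_rectDiagonal_mul_mul_conjTranspose (he : Function.Injective e) (U : Matrix m m 𝕜)
    (hV : V ∈ unitaryGroup n 𝕜) (p : m → ℝ) :
    U * rectDiagonal 𝕜 e p * Vᴴ * (U * rectDiagonal 𝕜 e p * Vᴴ)ᴴ = ofEigenvalues U (p ^ 2) := by
  have := mul_rectDiagonal_mul_ofEigenvalues_mul_conjTranspose he U hV p 1
  rw [ofEigenvalues_one hV, Matrix.mul_one] at this
  simpa [Pi.pow_def] using this

theorem rank_mul_rectDiagonal_mul (he : Function.Injective e) (hU : U ∈ unitaryGroup m 𝕜)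
    (hV : V ∈ unitaryGroup n 𝕜) (hp : ∀ i, p i ≠ 0) :
    (U * rectDiagonal 𝕜 e p * Vᴴ).rank = Fintype.card m := by
  rw [← rank_self_mul_conjTranspose, mul_rectDiagonal_mul_mul_conjTranspose he U hV]
  exact rank_of_isUnit _ ((posDef_ofEigenvalues_iff hU).2 fun i => sq_pos_of_ne_zero (hp i)).isUnit

theorem trace_ofEigenvalues_mul_inv_rectDiagonal (he : Function.Injective e)
    (hU : U ∈ unitaryGroup m 𝕜) (hV : V ∈ unitaryGroup n 𝕜) (s : m → ℝ) (hp : ∀ i, p i ≠ 0)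
    (hd : ∀ j, d j ≠ 0) :
    (ofEigenvalues U s * (U * rectDiagonal 𝕜 e p * Vᴴ * (ofEigenvalues V d)⁻¹ *
      (U * rectDiagonal 𝕜 e p * Vᴴ)ᴴ)⁻¹).trace = ((∑ i, s i * d (e i) / p i ^ 2 : ℝ) : 𝕜) := by
  rw [ofEigenvalues_inv hV hd, mul_rectDiagonal_mul_ofEigenvalues_mul_conjTranspose he U hV,
    ofEigenvalues_inv hU (d := fun i => p i ^ 2 * d⁻¹ (e i)) fun i =>
      mul_ne_zero (pow_ne_zero 2 (hp i)) (inv_ne_zero (hd (e i))),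
    ofEigenvalues_mul hU, trace_ofEigenvalues hU]
  congr! 2 with i
  simp [div_eq_mul_inv, mul_assoc, mul_comm, mul_left_comm]

end RectDiagonal

section Allocation

variable {m : Type*} [Fintype m] {β : ℝ} {α : m → ℝ}

/-- The diagonal entries `√(𝒫 √αᵢ / Σⱼ √αⱼ)` of the paper's `D_P`: gain `i` receives the share
`√αᵢ / Σⱼ √αⱼ` of the energy budget `𝒫 = β`. -/
noncomputable def optimalGain (β : ℝ) (α : m → ℝ) (i : m) : ℝ :=
  √(β * √(α i) / ∑ k, √(α k))

theorem optimalGain_sq (hβ : 0 ≤ β) (α : m → ℝ) (i : m) :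
    optimalGain β α i ^ 2 = β * √(α i) / ∑ k, √(α k) :=
  Real.sq_sqrt (div_nonneg (mul_nonneg hβ (Real.sqrt_nonneg _))
    (sum_nonneg fun _ _ => Real.sqrt_nonneg _))

theorem sum_sqrt_pos [Nonempty m] (hα : ∀ i, 0 < α i) : 0 < ∑ i, √(α i) :=
  sum_pos (fun i _ => Real.sqrt_pos.2 (hα i)) univ_nonempty

theorem optimalGain_pos [Nonempty m] (hβ : 0 < β) (hα : ∀ i, 0 < α i) (i : m) :
    0 < optimalGain β α i :=
  Real.sqrt_pos.2 (div_pos (mul_pos hβ (Real.sqrt_pos.2 (hα i))) (sum_sqrt_pos hα))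

theorem sum_optimalGain_sq [Nonempty m] (hβ : 0 ≤ β) (hα : ∀ i, 0 < α i) :
    ∑ i, optimalGain β α i ^ 2 = β := by
  simp only [optimalGain_sq hβ]
  rw [← sum_div, ← mul_sum, mul_div_cancel_right₀ _ (sum_sqrt_pos hα).ne']

theorem sum_div_optimalGain_sq (hβ : 0 < β) (hα : ∀ i, 0 < α i) :
    ∑ i, α i / optimalGain β α i ^ 2 = (∑ i, √(α i)) ^ 2 / β := by
  have hterm (i : m) : α i / optimalGain β α i ^ 2 = √(α i) * ((∑ k, √(α k)) / β) := by
    rw [optimalGain_sq hβ.le]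
    nth_rw 1 [← Real.mul_self_sqrt (hα i).le]
    have := (Real.sqrt_pos.2 (hα i)).ne'
    field_simp
  simp only [hterm]
  rw [← sum_mul]
  ring

end Allocation

section TrainingCost

variable {nT nR B : ℕ}

theorem Jcost_eq_trace_mul_trace (IT : Matrix (Fin nT) (Fin nT) ℂ)
    (IR : Matrix (Fin nR) (Fin nR) ℂ) (SQ : Matrix (Fin B) (Fin B) ℂ)
    {SR : Matrix (Fin nR) (Fin nR) ℂ} (hSR : IsUnit SR.det) (P : Matrix (Fin nT) (Fin B) ℂ) :
    Jcost nT nR B IT IR SQ SR P =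
      (IR * SR).trace * (ITᵀ * (Pᵀᴴ * SQᵀ⁻¹ * Pᵀ)⁻¹).trace := by
  rw [Jcost, conjTranspose_kronecker, inv_kronecker, ← mul_kronecker_mul, ← mul_kronecker_mul,
    inv_kronecker, ← mul_kronecker_mul, trace_kronecker, conjTranspose_one, Matrix.one_mul,
    Matrix.mul_one, nonsing_inv_nonsing_inv _ hSR, mul_comm]

/-- `Fin.castLE` as an initial segment embedding: it selects the `n` smallest indices. -/
def castLEInitialSeg {n m : ℕ} (h : n ≤ m) : Fin n ≤i Fin m where
  toRelEmbedding := (Fin.castLEOrderEmb h).ltEmbedding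
  mem_range_of_rel' i j hij := ⟨⟨j, (Fin.lt_def.1 hij).trans i.2⟩, rfl⟩

variable {IT : Matrix (Fin nT) (Fin nT) ℂ} {IR SR : Matrix (Fin nR) (Fin nR) ℂ}
  {SQ : Matrix (Fin B) (Fin B) ℂ} {UT : Matrix (Fin nT) (Fin nT) ℂ}
  {UQ : Matrix (Fin B) (Fin B) ℂ} {DT : Fin nT → ℝ} {DQ : Fin B → ℝ} {β : ℝ}

theorem Jcost_of_transpose_eq_rectDiagonal (hSR : IsUnit SR.det)
    (hUT : UT ∈ unitaryGroup (Fin nT) ℂ) (hUQ : UQ ∈ unitaryGroup (Fin B) ℂ)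
    (hIT : ITᵀ = ofEigenvalues UT DT) (hSQ : SQᵀ = ofEigenvalues UQ DQ) (hDQ : ∀ j, DQ j ≠ 0)
    {e : Fin nT → Fin B} (he : Function.Injective e) {p : Fin nT → ℝ} (hp : ∀ i, p i ≠ 0)
    {P : Matrix (Fin nT) (Fin B) ℂ} (hP : Pᵀ = (UT * rectDiagonal ℂ e p * UQᴴ)ᴴ) :
    Jcost nT nR B IT IR SQ SR P =
      (IR * SR).trace * ((∑ i, DT i * DQ (e i) / p i ^ 2 : ℝ) : ℂ) := by
  rw [Jcost_eq_trace_mul_trace IT IR SQ hSR, hIT, hSQ, hP, conjTranspose_conjTranspose]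
  exact congrArg _ (trace_ofEigenvalues_mul_inv_rectDiagonal he hUT hUQ DT hp hDQ)

theorem le_re_Jcost (hB : nT ≤ B) (hIR : IR.PosSemidef) (hSR : SR.PosDef)
    (hUT : UT ∈ unitaryGroup (Fin nT) ℂ) (hUQ : UQ ∈ unitaryGroup (Fin B) ℂ)
    (hIT : ITᵀ = ofEigenvalues UT DT) (hSQ : SQᵀ = ofEigenvalues UQ DQ)
    (hDT : Antitone DT) (hDT0 : ∀ i, 0 < DT i) (hDQ : Monotone DQ) (hDQ0 : ∀ j, 0 < DQ j)
    (hβ : 0 < β) {P : Matrix (Fin nT) (Fin B) ℂ} (hP : P.rank = nT)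
    (hPβ : (P * Pᴴ).trace.re ≤ β) :
    ((IR * SR).trace * (((∑ i, √(DT i * DQ (Fin.castLE hB i))) ^ 2 / β : ℝ) : ℂ)).re ≤
      (Jcost nT nR B IT IR SQ SR P).re := by
  obtain ⟨hre, him⟩ := Complex.nonneg_iff.1 (trace_mul_nonneg_of_posSemidef hIR hSR.posSemidef)
  rw [Jcost_eq_trace_mul_trace IT IR SQ ((isUnit_iff_isUnit_det SR).1 hSR.isUnit) P, hIT, hSQ,
    Complex.mul_re, Complex.mul_re, ← him]
  simp only [zero_mul, sub_zero, Complex.ofReal_re]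
  refine mul_le_mul_of_nonneg_left ?_ hre
  exact sum_sqrt_sq_div_le_re_trace (castLEInitialSeg hB) hUT hUQ hDT hDT0 hDQ hDQ0
    (by rw [rank_transpose, hP, Fintype.card_fin]) hβ
    (by rwa [trace_transpose_conjTranspose_mul_transpose])

end TrainingCost

theorem stmt6_general (nT nR B : ℕ) (hnT : 1 ≤ nT) (hBnT : nT ≤ B)
    (IT : Matrix (Fin nT) (Fin nT) ℂ) (hIT : IT.PosDef)
    (IR : Matrix (Fin nR) (Fin nR) ℂ) (hIR : IR.PosSemidef)
    (SQ : Matrix (Fin B) (Fin B) ℂ) (hSQ : SQ.PosDef)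
    (SR : Matrix (Fin nR) (Fin nR) ℂ) (hSR : SR.PosDef)
    (Pbudget : ℝ) (hPbudget : 0 < Pbudget)
    (UT : Matrix (Fin nT) (Fin nT) ℂ) (hUT : UT ∈ Matrix.unitaryGroup (Fin nT) ℂ)
    (DT : Fin nT → ℝ) (hDTanti : Antitone DT)
    (hITdec : ITᵀ = UT * Matrix.diagonal (fun i => (DT i : ℂ)) * UTᴴ)
    (UQ : Matrix (Fin B) (Fin B) ℂ) (hUQ : UQ ∈ Matrix.unitaryGroup (Fin B) ℂ)
    (DQ : Fin B → ℝ) (hDQmono : Monotone DQ)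
    (hSQdec : SQᵀ = UQ * Matrix.diagonal (fun i => (DQ i : ℂ)) * UQᴴ)
    (α : Fin nT → ℝ) (hα : ∀ i, α i = DT i * DQ (Fin.castLE hBnT i))
    (DP : Matrix (Fin nT) (Fin B) ℂ)
    (hDP : ∀ (i : Fin nT) (j : Fin B), DP i j = if (i : ℕ) = (j : ℕ) then
        (Real.sqrt (Pbudget * Real.sqrt (α i) / ∑ k, Real.sqrt (α k)) : ℂ) else 0)
    (Popt : Matrix (Fin nT) (Fin B) ℂ)
    (hPopt : Popt = (UT * DP * UQᴴ).map (starRingEnd ℂ)) :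
    Popt.rank = nT ∧
    (Popt * Poptᴴ).trace = (Pbudget : ℂ) ∧
    Jcost nT nR B IT IR SQ SR Popt =
      (IR * SR).trace * (((∑ i, Real.sqrt (α i)) ^ 2 / Pbudget : ℝ) : ℂ) ∧
    ∀ P : Matrix (Fin nT) (Fin B) ℂ, P.rank = nT → ((P * Pᴴ).trace).re ≤ Pbudget →
      (Jcost nT nR B IT IR SQ SR Popt).re ≤ (Jcost nT nR B IT IR SQ SR P).re := by
  have : Nonempty (Fin nT) := ⟨⟨0, hnT⟩⟩
  have hcast := Fin.castLE_injective hBnT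
  have hSRdet := (isUnit_iff_isUnit_det SR).1 hSR.isUnit
  replace hITdec : ITᵀ = ofEigenvalues UT DT := hITdec
  replace hSQdec : SQᵀ = ofEigenvalues UQ DQ := hSQdec
  have hDT0 : ∀ i, 0 < DT i := (posDef_ofEigenvalues_iff hUT).1 (hITdec ▸ hIT.transpose)
  have hDQ0 : ∀ j, 0 < DQ j := (posDef_ofEigenvalues_iff hUQ).1 (hSQdec ▸ hSQ.transpose)
  have hα0 (i : Fin nT) : 0 < α i := hα i ▸ mul_pos (hDT0 i) (hDQ0 _)
  have hp (i : Fin nT) := (optimalGain_pos hPbudget hα0 i).ne'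
  have hDP' : DP = rectDiagonal ℂ (Fin.castLE hBnT) (optimalGain Pbudget α) := by
    ext i j
    simp [hDP, rectDiagonal, optimalGain, Fin.ext_iff, eq_comm]
  have hPoptT : Poptᵀ = (UT * rectDiagonal ℂ (Fin.castLE hBnT) (optimalGain Pbudget α) * UQᴴ)ᴴ := by
    rw [hPopt, hDP']
    rfl
  have hJ := Jcost_of_transpose_eq_rectDiagonal (IR := IR) hSRdet hUT hUQ hITdec hSQdec
    (fun j => (hDQ0 j).ne') hcast hp hPoptT
  simp only [← hα, sum_div_optimalGain_sq hPbudget hα0] at hJ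
  refine ⟨?_, ?_, hJ, fun P hP hPle => ?_⟩
  · rw [← rank_transpose, hPoptT, rank_conjTranspose, rank_mul_rectDiagonal_mul hcast hUT hUQ hp,
      Fintype.card_fin]
  · rw [← trace_transpose_conjTranspose_mul_transpose, hPoptT, conjTranspose_conjTranspose,
      mul_rectDiagonal_mul_mul_conjTranspose hcast UT hUQ, trace_ofEigenvalues hUT]
    exact congrArg _ (sum_optimalGain_sq hPbudget.le hα0)
  · simpa only [hJ, hα] using
      le_re_Jcost hBnT hIR hSR hUT hUQ hITdec hSQdec hDTanti hDT0 hDQmono hDQ0 hPbudget hP hPle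

/-- Theorem 4: the training matrix `P_opt = (U_T D_P U_Qᴴ)^*` minimizes
`J(P) = tr[𝓘_adm (P̃ᴴ S⁻¹ P̃)⁻¹]` subject to the energy budget `tr(P Pᴴ) ≤ Pbudget`,
uses the full budget, and attains the value `tr(𝓘_R S_R) (Σ_i √α_i)² / Pbudget`. -/
theorem stmt6 (nT nR B : ℕ) (hnT : 1 ≤ nT) (hnR : 1 ≤ nR) (hBnT : nT ≤ B)
    (IT : Matrix (Fin nT) (Fin nT) ℂ) (hIT : IT.PosDef)
    (IR : Matrix (Fin nR) (Fin nR) ℂ) (hIR : IR.PosDef)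
    (SQ : Matrix (Fin B) (Fin B) ℂ) (hSQ : SQ.PosDef)
    (SR : Matrix (Fin nR) (Fin nR) ℂ) (hSR : SR.PosDef)
    (Pbudget : ℝ) (hPbudget : 0 < Pbudget)
    (UT : Matrix (Fin nT) (Fin nT) ℂ) (hUT : UT ∈ Matrix.unitaryGroup (Fin nT) ℂ)
    (DT : Fin nT → ℝ) (hDTanti : Antitone DT)
    (hITdec : ITᵀ = UT * Matrix.diagonal (fun i => (DT i : ℂ)) * UTᴴ)
    (UQ : Matrix (Fin B) (Fin B) ℂ) (hUQ : UQ ∈ Matrix.unitaryGroup (Fin B) ℂ)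
    (DQ : Fin B → ℝ) (hDQmono : Monotone DQ)
    (hSQdec : SQᵀ = UQ * Matrix.diagonal (fun i => (DQ i : ℂ)) * UQᴴ)
    (α : Fin nT → ℝ) (hα : ∀ i, α i = DT i * DQ (Fin.castLE hBnT i))
    (DP : Matrix (Fin nT) (Fin B) ℂ)
    (hDP : ∀ (i : Fin nT) (j : Fin B), DP i j = if (i : ℕ) = (j : ℕ) then
        (Real.sqrt (Pbudget * Real.sqrt (α i) / ∑ k, Real.sqrt (α k)) : ℂ) else 0)
    (Popt : Matrix (Fin nT) (Fin B) ℂ)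
    (hPopt : Popt = (UT * DP * UQᴴ).map (starRingEnd ℂ)) :
    Popt.rank = nT ∧
    (Popt * Poptᴴ).trace = (Pbudget : ℂ) ∧
    Jcost nT nR B IT IR SQ SR Popt =
      (IR * SR).trace * (((∑ i, Real.sqrt (α i)) ^ 2 / Pbudget : ℝ) : ℂ) ∧
    ∀ P : Matrix (Fin nT) (Fin B) ℂ, P.rank = nT → ((P * Pᴴ).trace).re ≤ Pbudget →
      (Jcost nT nR B IT IR SQ SR Popt).re ≤ (Jcost nT nR B IT IR SQ SR P).re :=
  stmt6_general nT nR B hnT hBnT IT hIT IR hIR.posSemidef SQ hSQ SR hSR Pbudget hPbudget UT hUT DT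
    hDTanti hITdec UQ hUQ DQ hDQmono hSQdec α hα DP hDP Popt hPopt
end
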